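/- Let I ⊆ R be a monomial ideal and let x_i be a variable occurring in G(I). Set q = max{deg_{x_i}(x^a) : x^a ∈ G(I)}, B_i = {x^a ∈ G(I) : deg_{x_i}(x^a) = q}, A_i = G(I) \ B_i, p = max{deg_{x_i}(x^a) : x^a ∈ A_i}, L = ({x^a/x_i : x^a ∈ B_i} ∪ A_i), and L' = ({x^a/x_i^{q−1} : x^a ∈ B_i} ∪ A_i). Then: (a) if p ≥ 1 and q − p ≥ 2, then reg(R/L) ≤ reg(R/I) ≤ reg(R/L) + 1; (b) if p ≥ 0 and q − p = 1, then reg(R/L) ≤ reg(R/I); (c) if p = 0 and q ≥ 2, then reg(R/L') ≤ reg(R/I) ≤ reg(R/L') + q − 1. -/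

import Mathlib

/-!
The idea is to pass to multigraded resolutions and to relabel their multidegrees.

A multigraded resolution of `R/J`, for a monomial ideal `J`, is a sequence of scalar matrices
together with multidegrees of the basis elements (`MRes`), and exactness may be checked in each
multidegree `b`, where only the basis elements of multidegree `≤ b` contribute. If `ψ ⊣ φ` is a
Galois connection on exponent vectors, replacing every multidegree `a` by `ψ a` turns the strand in
multidegree `b` into the old strand in multidegree `φ b`, because `ψ a ≤ b ↔ a ≤ φ b`. Hence the
same matrices resolve the quotient by the ideal generated by the `x^(ψ a)`, `x^a` running over
generators of `J` (`MRes.relabel`), and a bound on the twists grows by at most `k` if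
`deg (ψ a) ≤ deg a + k`.

All the inequalities come from maps `ψ` that apply a lower adjoint `g : ℕ → ℕ` to the exponent of
`x_i` only (`cmreg_coord`). For `L` from `I`, exponents `≥ q` drop by one; for `I` from `L` with
`p + 2 ≤ q`, exponents `≥ q - 1` rise by one; for `L'` from `I`, exponents `1, …, q` become `1` and
the larger ones drop by `q - 1`; for `I` from `L'`, positive exponents rise by `q - 1`.

The regularity is defined by `ℤ`-graded resolutions, so these have to be turned into multigraded
ones with the same bound (`exists_mres_of_resBound`). This is done one step at a time: given a
bounded `ℤ`-graded resolution of a multigraded module, a multigraded free cover in the allowed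
degrees is chosen, and its kernel again has a bounded `ℤ`-graded resolution, by an explicit
version of Schanuel's lemma (`syz_ker`). Finally, `exists_mres` provides some bounded resolution
of every monomial ideal, so that the minimum defining the regularity is attained unless the bounds
are unbounded below.
-/

open MvPolynomial CategoryTheory Opposite

noncomputable section

/-- The polynomial ring `K[x_v : v ∈ σ]` over the field `K`. -/
abbrev MvPoly (K : Type) [Field K] (σ : Type) : Type := MvPolynomial σ K

variable (K : Type) [Field K] (σ : Type)

/-- The graded maximal ideal `m = (x_v : v ∈ σ)` generated by all the variables. -/
def maxIdeal : Ideal (MvPoly K σ) := Ideal.span (Set.range MvPolynomial.X)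

/-- The depth of `R/I` with respect to the graded maximal ideal, defined as
`inf { i | Ext^i(R/m, R/I) ≠ 0 }` (with value `⊤` for the zero module). -/
def depthQ (I : Ideal (MvPoly K σ)) : ℕ∞ :=
  sInf { d : ℕ∞ | ∃ i : ℕ, d = i ∧
    Nontrivial (((Ext (MvPoly K σ) (ModuleCat (MvPoly K σ)) i).obj
      (op (ModuleCat.of (MvPoly K σ) (MvPoly K σ ⧸ maxIdeal K σ)))).obj
      (ModuleCat.of (MvPoly K σ) (MvPoly K σ ⧸ I))) }

/-- The degree-`e` homogeneous component condition, for an integer `e`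
(for `e < 0` the component is zero). -/
def HomogComp (e : ℤ) (p : MvPoly K σ) : Prop :=
  if 0 ≤ e then p ∈ homogeneousSubmodule σ K e.toNat else p = 0

/-- `v` is a homogeneous element of degree `e` of the graded free module
`⊕_j R(-dg j)`. -/
def IsHomogVec {m : ℕ} (dg : Fin m → ℤ) (e : ℤ) (v : Fin m → MvPoly K σ) : Prop :=
  ∀ j, HomogComp K σ (e - dg j) (v j)

/-- The degree-`e` homogeneous component of `R/I`. -/
def QuotComp (I : Ideal (MvPoly K σ)) (e : ℤ) : Submodule K (MvPoly K σ ⧸ I) :=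
  if 0 ≤ e then
    Submodule.map (Ideal.Quotient.mkₐ K I).toLinearMap (homogeneousSubmodule σ K e.toNat)
  else ⊥

/-- A graded free resolution of `R/I` by finitely generated graded free modules
`F i = ⊕_{j < rk i} R(-dg i j)`, with degree preserving (degree zero) maps. -/
structure GradedFreeRes (I : Ideal (MvPoly K σ)) where
  rk : ℕ → ℕ
  dg : (i : ℕ) → Fin (rk i) → ℤ
  dmap : (i : ℕ) → ((Fin (rk (i + 1)) → MvPoly K σ) →ₗ[MvPoly K σ] (Fin (rk i) → MvPoly K σ))
  aug : (Fin (rk 0) → MvPoly K σ) →ₗ[MvPoly K σ] (MvPoly K σ ⧸ I)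
  aug_surj : Function.Surjective aug
  exact0 : Function.Exact (dmap 0) aug
  exactS : ∀ i, Function.Exact (dmap (i + 1)) (dmap i)
  graded : ∀ i (e : ℤ) v, IsHomogVec K σ (dg (i + 1)) e v → IsHomogVec K σ (dg i) e (dmap i v)
  aug_graded : ∀ (e : ℤ) v, IsHomogVec K σ (dg 0) e v → aug v ∈ QuotComp K σ I e

/-- `R/I` admits a graded free resolution all of whose twists `dg i j` satisfy
`dg i j - i ≤ r`. -/
def ResBound (I : Ideal (MvPoly K σ)) (r : ℤ) : Prop :=
  ∃ F : GradedFreeRes K σ I, ∀ i j, F.dg i j - i ≤ r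

open Classical in
/-- The Castelnuovo–Mumford regularity of `R/I`: the least `r` bounding the twists of
a graded free resolution of `R/I` (with the convention `⊥ = -∞` for the zero module). -/
def CMreg (I : Ideal (MvPoly K σ)) : WithBot ℤ :=
  if h : ∃ r : ℤ, ResBound K σ I r ∧ ∀ s : ℤ, ResBound K σ I s → r ≤ s
  then ((h.choose : ℤ) : WithBot ℤ) else ⊥

variable {n : ℕ}

/-- The monomial `x^a`. -/
def mono (K : Type) [Field K] {n : ℕ} (a : Fin n →₀ ℕ) : MvPoly K (Fin n) :=
  MvPolynomial.monomial a 1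

/-- A monomial ideal: an ideal generated by monomials. -/
def IsMonomialIdeal (I : Ideal (MvPoly K (Fin n))) : Prop :=
  ∃ S : Set (Fin n →₀ ℕ), I = Ideal.span (mono K '' S)

/-- A squarefree exponent vector. -/
def SqfreeExp (a : Fin n →₀ ℕ) : Prop := ∀ i, a i ≤ 1

/-- A squarefree monomial ideal: an ideal generated by squarefree monomials. -/
def IsSqfreeMonomialIdeal (I : Ideal (MvPoly K (Fin n))) : Prop :=
  ∃ S : Set (Fin n →₀ ℕ), (∀ a ∈ S, SqfreeExp a) ∧ I = Ideal.span (mono K '' S)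

end

namespace RegRelabel

/-- Vectors of polynomials are additively spanned by terms `t x^c e_j`. -/
theorem vec_induction {K : Type} [Field K] {n : ℕ} {ι : Type} [Fintype ι]
    [DecidableEq ι] {P : (ι → MvPoly K (Fin n)) → Prop} (h0 : P 0)
    (hadd : ∀ v w, P v → P w → P (v + w))
    (hm : ∀ j c t, P (Pi.single j (monomial c t))) (v : ι → MvPoly K (Fin n)) : P v := by
  rw [← Finset.univ_sum_single v]
  apply Finset.sum_induction _ P hadd h0
  intro j _
  refine MvPolynomial.induction_on' (P := fun p => P (Pi.single j p)) (v j) (fun c t => hm j c t) ?_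
  intro p q hp hq
  rw [Pi.single_add]
  exact hadd _ _ hp hq

/-! ### Homogeneous vectors and graded maps -/

section Graded

variable {K : Type} [Field K] {n : ℕ}

theorem homogComp_iff {z : ℤ} {p : MvPoly K (Fin n)} :
    HomogComp K (Fin n) z p ↔ ∀ c, coeff c p ≠ 0 → (c.degree : ℤ) = z := by
  unfold HomogComp
  split_ifs with h
  · rw [mem_homogeneousSubmodule]
    constructor
    · intro hp c hc
      by_contra hne
      exact hc (hp.coeff_eq_zero (by omega))
    · intro hp c hc
      have := hp c hc
      have e : Finsupp.weight 1 c = c.degree := by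
        rw [Finsupp.degree_eq_weight_one]; rfl
      rw [e]
      omega
  · constructor
    · rintro rfl c hc
      simp at hc
    · intro hp
      ext c
      by_contra hc
      have := hp c hc
      omega

theorem homogComp_zero {z : ℤ} : HomogComp K (Fin n) z 0 := by
  rw [homogComp_iff]; simp

theorem homogComp_add {z : ℤ} {p q : MvPoly K (Fin n)} (hp : HomogComp K (Fin n) z p)
    (hq : HomogComp K (Fin n) z q) : HomogComp K (Fin n) z (p + q) := by
  unfold HomogComp at *
  split_ifs at * with h
  · exact add_mem hp hq
  · rw [hp, hq, add_zero]

theorem homogComp_neg {z : ℤ} {p : MvPoly K (Fin n)} (hp : HomogComp K (Fin n) z p) :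
    HomogComp K (Fin n) z (-p) := by
  unfold HomogComp at *
  split_ifs at * with h
  · exact neg_mem hp
  · rw [hp, neg_zero]

theorem homogComp_mul {z w : ℤ} {p q : MvPoly K (Fin n)} (hp : HomogComp K (Fin n) z p)
    (hq : HomogComp K (Fin n) w q) : HomogComp K (Fin n) (z + w) (p * q) := by
  rw [homogComp_iff] at *
  intro c hc
  rw [coeff_mul] at hc
  obtain ⟨⟨a, b⟩, hab, hne⟩ := Finset.exists_ne_zero_of_sum_ne_zero hc
  rw [Finset.HasAntidiagonal.mem_antidiagonal] at hab
  simp only at hab hne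
  rw [← hp a (left_ne_zero_of_mul hne), ← hq b (right_ne_zero_of_mul hne), ← hab, map_add]
  push_cast; rfl

theorem homogComp_monomial (c : Fin n →₀ ℕ) (t : K) :
    HomogComp K (Fin n) c.degree (MvPolynomial.monomial c t) := by
  classical
  rw [homogComp_iff]
  intro c' h
  rw [coeff_monomial] at h
  split_ifs at h with hc
  · rw [hc]
  · exact absurd rfl h

/-- Projection of a polynomial to its component of integer degree `z` (zero for `z < 0`). -/
noncomputable def hc (K : Type) [Field K] (n : ℕ) (z : ℤ) : MvPoly K (Fin n) →ₗ[K] MvPoly K (Fin n) :=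
  if 0 ≤ z then homogeneousComponent z.toNat else 0

theorem coeff_hc (z : ℤ) (p : MvPoly K (Fin n)) (c : Fin n →₀ ℕ) :
    coeff c (hc K n z p) = if (c.degree : ℤ) = z then coeff c p else 0 := by
  unfold hc
  split_ifs with h h' h'
  · rw [coeff_homogeneousComponent, if_pos (by omega)]
  · rw [coeff_homogeneousComponent, if_neg (by omega)]
  · omega
  · simp

theorem hc_homog (z : ℤ) (p : MvPoly K (Fin n)) : HomogComp K (Fin n) z (hc K n z p) := by
  rw [homogComp_iff]
  intro c h
  rw [coeff_hc] at h
  by_contra hne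
  rw [if_neg hne] at h
  exact h rfl

theorem hc_of_homog {z w : ℤ} {p : MvPoly K (Fin n)} (hp : HomogComp K (Fin n) z p) :
    hc K n w p = if w = z then p else 0 := by
  rw [homogComp_iff] at hp
  ext c
  rw [coeff_hc]
  by_cases h : coeff c p = 0
  · split_ifs <;> simp [h]
  · have := hp c h
    split_ifs <;> first | rfl | omega

/-- `v` is homogeneous of degree `e` in the graded free module `⊕_{j : ι} R(-d j)`; this is
`IsHomogVec` over an arbitrary index type. -/
def HV {ι : Type} (d : ι → ℤ) (e : ℤ) (v : ι → MvPoly K (Fin n)) : Prop :=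
  ∀ j, HomogComp K (Fin n) (e - d j) (v j)

/-- A degree-preserving map of graded free modules. -/
def Gr {ι κ : Type} (d : ι → ℤ) (d' : κ → ℤ)
    (D : (ι → MvPoly K (Fin n)) →ₗ[MvPoly K (Fin n)] (κ → MvPoly K (Fin n))) : Prop :=
  ∀ e v, HV d e v → HV d' e (D v)

variable {ι κ : Type} {d : ι → ℤ} {d' : κ → ℤ}

theorem HV.add {e : ℤ} {v w : ι → MvPoly K (Fin n)} (hv : HV d e v) (hw : HV d e w) :
    HV d e (v + w) := fun j => homogComp_add (hv j) (hw j)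

theorem HV.sub {e : ℤ} {v w : ι → MvPoly K (Fin n)} (hv : HV d e v) (hw : HV d e w) :
    HV d e (v - w) := fun j => by
  rw [Pi.sub_apply, sub_eq_add_neg (v j)]
  exact homogComp_add (hv j) (homogComp_neg (hw j))

theorem HV.single_monomial [DecidableEq ι] (j : ι) (c : Fin n →₀ ℕ) (t : K) :
    HV d (c.degree + d j) (Pi.single j (monomial c t) : ι → MvPoly K (Fin n)) := by
  intro k
  by_cases h : k = j
  · subst h
    rw [Pi.single_eq_same, add_sub_cancel_right]
    exact homogComp_monomial c t
  · rw [Pi.single_eq_of_ne h]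
    exact homogComp_zero

theorem HV.single_one [DecidableEq ι] (j : ι) :
    HV d (d j) (Pi.single j 1 : ι → MvPoly K (Fin n)) := by
  have := HV.single_monomial (K := K) (n := n) (d := d) j 0 1
  simpa using this

/-- Projection of the graded free module `⊕ R(-d j)` to its component of degree `e`. -/
noncomputable def piE (K : Type) [Field K] (n : ℕ) {ι : Type} (d : ι → ℤ) (e : ℤ) :
    (ι → MvPoly K (Fin n)) →ₗ[K] (ι → MvPoly K (Fin n)) :=
  LinearMap.pi fun j => hc K n (e - d j) ∘ₗ LinearMap.proj j

theorem piE_apply (e : ℤ) (v : ι → MvPoly K (Fin n)) (j : ι) :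
    piE K n d e v j = hc K n (e - d j) (v j) := rfl

theorem piE_HV (e : ℤ) (v : ι → MvPoly K (Fin n)) : HV d e (piE K n d e v) :=
  fun _ => hc_homog _ _

theorem piE_of_HV {e e' : ℤ} {v : ι → MvPoly K (Fin n)} (h : HV d e v) :
    piE K n d e' v = if e' = e then v else 0 := by
  ext1 j
  rw [piE_apply, hc_of_homog (h j)]
  by_cases he : e' = e
  · simp [he]
  · rw [if_neg he, if_neg (by omega)]; rfl

theorem piE_comm [Fintype ι]
    {D : (ι → MvPoly K (Fin n)) →ₗ[MvPoly K (Fin n)] (κ → MvPoly K (Fin n))} (hD : Gr d d' D)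
    (e : ℤ) (v : ι → MvPoly K (Fin n)) : D (piE K n d e v) = piE K n d' e (D v) := by
  classical
  induction v using vec_induction with
  | h0 => simp
  | hadd v w hv hw => simp only [map_add, hv, hw]
  | hm j c t =>
    have h1 := HV.single_monomial (K := K) (d := d) j c t
    rw [piE_of_HV h1, piE_of_HV (hD _ _ h1)]
    split_ifs <;> simp

/-- Homogeneous elements of the image of a graded map have homogeneous preimages. -/
theorem exists_lift [Fintype ι]
    {D : (ι → MvPoly K (Fin n)) →ₗ[MvPoly K (Fin n)] (κ → MvPoly K (Fin n))} (hD : Gr d d' D)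
    {e : ℤ} {w : κ → MvPoly K (Fin n)} (hw : HV d' e w) (hr : w ∈ LinearMap.range D) :
    ∃ v, HV d e v ∧ D v = w := by
  obtain ⟨v, rfl⟩ := hr
  refine ⟨piE K n d e v, piE_HV e v, ?_⟩
  rw [piE_comm hD, piE_of_HV hw, if_pos rfl]

theorem gr_linearCombination [Fintype ι] {y : ι → κ → MvPoly K (Fin n)}
    (hy : ∀ j, HV d' (d j) (y j)) :
    Gr d d' (Fintype.linearCombination (MvPoly K (Fin n)) y) := by
  intro e v hv k
  rw [Fintype.linearCombination_apply, Finset.sum_apply]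
  refine Finset.sum_induction _ (HomogComp K (Fin n) (e - d' k)) (fun _ _ => homogComp_add)
    homogComp_zero ?_
  intro j _
  have := homogComp_mul (hv j) (hy j k)
  rwa [sub_add_sub_cancel] at this

/-- Maps out of a free module are built by choosing homogeneous images of the basis. -/
theorem exists_graded_map [Fintype ι] [DecidableEq ι] {M : Type} [AddCommGroup M]
    [Module (MvPoly K (Fin n)) M]
    (A : (ι → MvPoly K (Fin n)) →ₗ[MvPoly K (Fin n)] M)
    (C : (κ → MvPoly K (Fin n)) →ₗ[MvPoly K (Fin n)] M)
    (h : ∀ j, ∃ y, HV d' (d j) y ∧ C y = A (Pi.single j 1)) :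
    ∃ f : (ι → MvPoly K (Fin n)) →ₗ[MvPoly K (Fin n)] (κ → MvPoly K (Fin n)),
      Gr d d' f ∧ ∀ v, C (f v) = A v := by
  choose y hy hC using h
  refine ⟨Fintype.linearCombination _ y, gr_linearCombination hy, ?_⟩
  intro v
  have : C ∘ₗ Fintype.linearCombination _ y = A := by
    apply (Pi.basisFun (MvPoly K (Fin n)) ι).ext
    intro j
    simp only [Pi.basisFun_apply, LinearMap.comp_apply]
    rw [Fintype.linearCombination_apply_single, one_smul, hC]
  exact LinearMap.congr_fun this v

/-! ### Change of the first map of a graded free resolution -/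

/-- `Syz k r κ d N`: the submodule `N` of the graded free module `⊕_{κ} R(-d)` admits the first
`k` steps `F_{k-1} → ⋯ → F_0 → N` of a graded free resolution with the twists of `F_i`
at most `r + i`. -/
def Syz {K : Type} [Field K] {n : ℕ} : ℕ → ℤ → (κ : Type) → (κ → ℤ) →
    Submodule (MvPoly K (Fin n)) (κ → MvPoly K (Fin n)) → Prop
  | 0, _, _, _, _ => True
  | k + 1, r, κ, dκ, N => ∃ (ι : Type) (_ : Fintype ι) (d : ι → ℤ)
      (D : (ι → MvPoly K (Fin n)) →ₗ[MvPoly K (Fin n)] (κ → MvPoly K (Fin n))),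
      Gr d dκ D ∧ LinearMap.range D = N ∧ (∀ j, d j ≤ r) ∧ Syz k (r + 1) ι d (LinearMap.ker D)

/-- Extension by zero of vectors along `Sum.inl`. -/
def inlMap (R : Type) [CommRing R] (α β : Type) : (α → R) →ₗ[R] (α ⊕ β → R) where
  toFun v := Sum.elim v 0
  map_add' v w := by ext (x | x) <;> simp
  map_smul' v w := by ext (x | x) <;> simp

theorem Syz.inl {α β : Type} {dα : α → ℤ} {dβ : β → ℤ} {k : ℕ} {r : ℤ}
    {N : Submodule (MvPoly K (Fin n)) (α → MvPoly K (Fin n))} (h : Syz k r α dα N) :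
    Syz k r (α ⊕ β) (Sum.elim dα dβ) (N.map (inlMap (MvPoly K (Fin n)) α β)) := by
  cases k with
  | zero => trivial
  | succ k =>
    obtain ⟨ι, _, d, D, hD, rfl, hd, hk⟩ := h
    refine ⟨ι, inferInstance, d, inlMap _ α β ∘ₗ D, ?_, ?_, hd, ?_⟩
    · rintro e v hv (x | x)
      · exact hD e v hv x
      · exact homogComp_zero
    · rw [LinearMap.range_comp]
    · have : LinearMap.ker (inlMap (MvPoly K (Fin n)) α β ∘ₗ D) = LinearMap.ker D := by
        ext v
        simp only [LinearMap.mem_ker, LinearMap.comp_apply]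
        constructor
        · intro h
          ext1 j
          exact congrFun h (Sum.inl j)
        · intro h
          rw [h, map_zero]
      rw [this]
      exact hk

/-- Let `F_2 → F_1 → F_0 → M` be the start of a graded free resolution and `C : G → M` another
graded free cover. With `f : F_0 → G`, `g : G → F_0` lifting the identity of `M` and
`h : F_0 → F_1` satisfying `D_1 h = g f - 1`, the kernel of `C` has the resolution
`⋯ → F_3 → F_2 ⊕ F_0 → F_1 ⊕ G → ker C`, whose maps are
`(y, u) ↦ f (D_1 y) + u - f (g u)` and `(y, w) ↦ (D_2 y + h w, f w)`. -/
theorem syz_ker {M : Type} [AddCommGroup M] [Module (MvPoly K (Fin n)) M]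
    {F0 F1 F2 G : Type} [Fintype F0] [Fintype F1] [Fintype F2] [Fintype G]
    {d0 : F0 → ℤ} {d1 : F1 → ℤ} {d2 : F2 → ℤ} {dG : G → ℤ}
    (D0 : (F0 → MvPoly K (Fin n)) →ₗ[MvPoly K (Fin n)] M)
    (C : (G → MvPoly K (Fin n)) →ₗ[MvPoly K (Fin n)] M)
    (D1 : (F1 → MvPoly K (Fin n)) →ₗ[MvPoly K (Fin n)] (F0 → MvPoly K (Fin n)))
    (D2 : (F2 → MvPoly K (Fin n)) →ₗ[MvPoly K (Fin n)] (F1 → MvPoly K (Fin n)))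
    (hD1 : LinearMap.range D1 = LinearMap.ker D0) (hD2 : LinearMap.range D2 = LinearMap.ker D1)
    (g1 : Gr d1 d0 D1) (g2 : Gr d2 d1 D2)
    (f : (F0 → MvPoly K (Fin n)) →ₗ[MvPoly K (Fin n)] (G → MvPoly K (Fin n)))
    (hf : Gr d0 dG f) (hCf : ∀ v, C (f v) = D0 v)
    (g : (G → MvPoly K (Fin n)) →ₗ[MvPoly K (Fin n)] (F0 → MvPoly K (Fin n)))
    (hg : Gr dG d0 g) (hDg : ∀ v, D0 (g v) = C v) {r : ℤ}
    (b0 : ∀ j, d0 j ≤ r) (b1 : ∀ j, d1 j ≤ r + 1) (b2 : ∀ j, d2 j ≤ r + 2)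
    (bG : ∀ j, dG j ≤ r + 1) {k : ℕ} (hk : Syz k (r + 3) F2 d2 (LinearMap.ker D2)) :
    Syz (k + 2) (r + 1) G dG (LinearMap.ker C) := by
  classical
  obtain ⟨h, hh, hDh⟩ := exists_graded_map (d := d0) (d' := d1) (g ∘ₗ f - LinearMap.id) D1 (by
    intro j
    have h1 := HV.single_one (K := K) (n := n) (d := d0) j
    apply exists_lift g1
    · exact (hg _ _ (hf _ _ h1)).sub h1
    · rw [hD1, LinearMap.mem_ker]
      simp [hDg, hCf])
  simp only [LinearMap.sub_apply, LinearMap.comp_apply, LinearMap.id_apply] at hDh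
  have hD10 : ∀ y, D0 (D1 y) = 0 := fun y => by
    have : D1 y ∈ LinearMap.ker D0 := hD1 ▸ LinearMap.mem_range_self D1 y
    exact this
  have hD21 : ∀ y, D1 (D2 y) = 0 := fun y => by
    have : D2 y ∈ LinearMap.ker D1 := hD2 ▸ LinearMap.mem_range_self D2 y
    exact this
  let pl := LinearMap.funLeft (MvPoly K (Fin n)) (MvPoly K (Fin n)) (Sum.inl : F1 → F1 ⊕ G)
  let pr := LinearMap.funLeft (MvPoly K (Fin n)) (MvPoly K (Fin n)) (Sum.inr : G → F1 ⊕ G)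
  let E0 : (F1 ⊕ G → MvPoly K (Fin n)) →ₗ[MvPoly K (Fin n)] (G → MvPoly K (Fin n)) :=
    f ∘ₗ D1 ∘ₗ pl + (LinearMap.id - f ∘ₗ g) ∘ₗ pr
  have hE0 : ∀ v, E0 v = f (D1 (v ∘ Sum.inl)) + (v ∘ Sum.inr - f (g (v ∘ Sum.inr))) :=
    fun v => rfl
  let E1 : (F2 ⊕ F0 → MvPoly K (Fin n)) →ₗ[MvPoly K (Fin n)] (F1 ⊕ G → MvPoly K (Fin n)) :=
    { toFun := fun w => Sum.elim (D2 (w ∘ Sum.inl) + h (w ∘ Sum.inr)) (f (w ∘ Sum.inr))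
      map_add' := fun v w => by
        have e1 : (v + w) ∘ (Sum.inl : F2 → F2 ⊕ F0) = v ∘ Sum.inl + w ∘ Sum.inl := rfl
        have e2 : (v + w) ∘ (Sum.inr : F0 → F2 ⊕ F0) = v ∘ Sum.inr + w ∘ Sum.inr := rfl
        ext1 (x | x)
        · simp only [e1, e2, map_add, Sum.elim_inl, Pi.add_apply]; ring
        · simp only [e2, map_add, Sum.elim_inr, Pi.add_apply]
      map_smul' := fun c w => by
        have e1 : (c • w) ∘ (Sum.inl : F2 → F2 ⊕ F0) = c • (w ∘ Sum.inl) := rfl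
        have e2 : (c • w) ∘ (Sum.inr : F0 → F2 ⊕ F0) = c • (w ∘ Sum.inr) := rfl
        ext1 (x | x)
        · simp only [e1, e2, map_smul, Sum.elim_inl, Pi.add_apply, Pi.smul_apply, smul_add,
            RingHom.id_apply]
        · simp only [e2, map_smul, Sum.elim_inr, Pi.smul_apply, RingHom.id_apply] }
  have hE1 : ∀ w, E1 w = Sum.elim (D2 (w ∘ Sum.inl) + h (w ∘ Sum.inr)) (f (w ∘ Sum.inr)) :=
    fun w => rfl
  refine ⟨F1 ⊕ G, inferInstance, Sum.elim d1 dG, E0, ?_, ?_, ?_,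
    F2 ⊕ F0, inferInstance, Sum.elim d2 d0, E1, ?_, ?_, ?_, ?_⟩
  · intro e v hv
    have hl : HV d1 e (v ∘ Sum.inl) := fun j => hv (Sum.inl j)
    have hr : HV dG e (v ∘ Sum.inr) := fun j => hv (Sum.inr j)
    rw [hE0]
    exact (hf _ _ (g1 _ _ hl)).add (hr.sub (hf _ _ (hg _ _ hr)))
  · apply le_antisymm
    · rintro _ ⟨v, rfl⟩
      rw [LinearMap.mem_ker, hE0]
      simp [hCf, hDg, hD10]
    · intro z hz
      rw [LinearMap.mem_ker] at hz
      have : g z ∈ LinearMap.range D1 := by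
        rw [hD1, LinearMap.mem_ker, hDg, hz]
      obtain ⟨y, hy⟩ := this
      refine ⟨Sum.elim y z, ?_⟩
      rw [hE0, Sum.elim_comp_inl, Sum.elim_comp_inr, hy]
      abel
  · rintro (j | j)
    · exact b1 j
    · exact bG j
  · intro e v hv
    have hl : HV d2 e (v ∘ Sum.inl) := fun j => hv (Sum.inl j)
    have hr : HV d0 e (v ∘ Sum.inr) := fun j => hv (Sum.inr j)
    rw [hE1]
    rintro (j | j)
    · exact ((g2 _ _ hl).add (hh _ _ hr)) j
    · exact hf _ _ hr j
  · apply le_antisymm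
    · rintro _ ⟨v, rfl⟩
      rw [LinearMap.mem_ker, hE0, hE1, Sum.elim_comp_inl, Sum.elim_comp_inr, map_add, hD21, hDh]
      simp
    · intro v hv
      rw [LinearMap.mem_ker, hE0] at hv
      set y := v ∘ Sum.inl with hy
      set u := v ∘ Sum.inr with hu
      have hfu : f (g u - D1 y) = u := by
        rw [map_sub, ← sub_eq_zero, ← neg_eq_zero, ← hv]; abel
      have hk1 : y - h (g u - D1 y) ∈ LinearMap.range D2 := by
        rw [hD2, LinearMap.mem_ker, map_sub, hDh, hfu]; abel
      obtain ⟨y', hy'⟩ := hk1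
      refine ⟨Sum.elim y' (g u - D1 y), ?_⟩
      rw [hE1, Sum.elim_comp_inl, Sum.elim_comp_inr, hfu, hy', sub_add_cancel]
      exact Sum.elim_comp_inl_inr v
  · rintro (j | j)
    · have := b2 j; simp only [Sum.elim_inl]; omega
    · have := b0 j; simp only [Sum.elim_inr]; omega
  · have : LinearMap.ker E1 = (LinearMap.ker D2).map (inlMap (MvPoly K (Fin n)) F2 F0) := by
      ext w
      rw [LinearMap.mem_ker, hE1, Submodule.mem_map]
      constructor
      · intro hw
        have h1 : D2 (w ∘ Sum.inl) + h (w ∘ Sum.inr) = 0 := by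
          ext1 j; exact congrFun hw (Sum.inl j)
        have h2 : f (w ∘ Sum.inr) = 0 := by
          ext1 j; exact congrFun hw (Sum.inr j)
        have h3 : w ∘ Sum.inr = 0 := by
          have := congrArg D1 h1
          rw [map_add, hD21, hDh, h2, map_zero, map_zero] at this
          simpa using this
        refine ⟨w ∘ Sum.inl, ?_, ?_⟩
        · rw [LinearMap.mem_ker]; simpa [h3] using h1
        · conv_rhs => rw [← Sum.elim_comp_inl_inr w, h3]
          rfl
      · rintro ⟨y, hy, rfl⟩
        rw [LinearMap.mem_ker] at hy
        have e1 : (inlMap (MvPoly K (Fin n)) F2 F0 y) ∘ Sum.inl = y := rfl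
        have e2 : (inlMap (MvPoly K (Fin n)) F2 F0 y) ∘ Sum.inr = 0 := rfl
        rw [e1, e2, hy, map_zero, map_zero, add_zero]
        ext1 (j | j) <;> rfl
    rw [this]
    have e : r + 1 + 1 + 1 = r + 3 := by ring
    rw [e]
    exact hk.inl

/-- The kernel of an arbitrary bounded graded free cover of `N` inherits a bounded resolution
from `N`. -/
theorem syz_ker_of_cover {r : ℤ} {N : Submodule (MvPoly K (Fin n)) (κ → MvPoly K (Fin n))}
    (hN : ∀ k, Syz k r κ d' N) {G : Type} [Fintype G] {dG : G → ℤ}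
    {C : (G → MvPoly K (Fin n)) →ₗ[MvPoly K (Fin n)] (κ → MvPoly K (Fin n))}
    (hC : Gr dG d' C) (hCN : LinearMap.range C = N) (hdG : ∀ j, dG j ≤ r + 1) (k : ℕ) :
    Syz k (r + 1) G dG (LinearMap.ker C) := by
  classical
  have key : ∀ k, Syz (k + 2) (r + 1) G dG (LinearMap.ker C) := by
    intro k
    obtain ⟨F0, _, d0, D0, gD0, rD0, b0, F1, _, d1, D1, gD1, rD1, b1, F2, _, d2, D2, gD2, rD2,
      b2, hk⟩ := hN (k + 3)
    obtain ⟨f, hf, hCf⟩ := exists_graded_map (d := d0) (d' := dG) D0 C (fun j =>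
      exists_lift hC (gD0 _ _ (HV.single_one j)) (by rw [hCN, ← rD0]; exact ⟨_, rfl⟩))
    obtain ⟨g, hg, hDg⟩ := exists_graded_map (d := dG) (d' := d0) C D0 (fun j =>
      exists_lift gD0 (hC _ _ (HV.single_one j)) (by rw [rD0, ← hCN]; exact ⟨_, rfl⟩))
    have e : r + 1 + 1 + 1 = r + 3 := by ring
    rw [e] at hk
    exact syz_ker D0 C D1 D2 rD1 rD2 gD1 gD2 f hf hCf g hg hDg b0 b1
      (fun j => by have := b2 j; omega) hdG hk
  match k with
  | 0 => trivial
  | 1 =>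
    obtain ⟨ι, i1, d, D, h1, h2, h3, -⟩ := key 0
    exact ⟨ι, i1, d, D, h1, h2, h3, trivial⟩
  | k + 2 => exact key k

end Graded

/-! ### The ideal as a syzygy module of the quotient -/

section Start

variable {K : Type} [Field K] {n : ℕ}

theorem mem_span_mono {S : Set (Fin n →₀ ℕ)} {p : MvPoly K (Fin n)} :
    p ∈ Ideal.span (mono K '' S) ↔ ∀ c, coeff c p ≠ 0 → ∃ a ∈ S, a ≤ c := by
  have h := mem_ideal_span_monomial_image (x := p) (s := S)
  simp only [mem_support_iff] at h
  exact h

theorem hc_mem_span_mono {S : Set (Fin n →₀ ℕ)} {p : MvPoly K (Fin n)} (z : ℤ)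
    (hp : p ∈ Ideal.span (mono K '' S)) : hc K n z p ∈ Ideal.span (mono K '' S) := by
  rw [mem_span_mono] at *
  intro c h
  rw [coeff_hc] at h
  split_ifs at h with h'
  · exact hp c h
  · exact absurd rfl h

/-- The augmentation of a graded resolution of `R/J` surjects onto `(R/J)_0` in degree zero, for a
homogeneous ideal `J`. -/
theorem exists_lift_one {J : Ideal (MvPoly K (Fin n))} (hJ : ∀ p ∈ J, hc K n 0 p ∈ J)
    {m : ℕ} {d : Fin m → ℤ}
    (aug : (Fin m → MvPoly K (Fin n)) →ₗ[MvPoly K (Fin n)] (MvPoly K (Fin n) ⧸ J))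
    (hs : Function.Surjective aug)
    (hg : ∀ (e : ℤ) v, HV d e v → aug v ∈ QuotComp K (Fin n) J e) :
    ∃ v, HV d 0 v ∧ aug v = Ideal.Quotient.mk _ 1 := by
  -- the projection of `R/J` to its component of degree zero
  let τ : (MvPoly K (Fin n) ⧸ J.restrictScalars K) →ₗ[K] (MvPoly K (Fin n) ⧸ J.restrictScalars K) :=
    Submodule.mapQ (J.restrictScalars K) (J.restrictScalars K) (hc K n 0)
      hJ
  let τ' : (MvPoly K (Fin n) ⧸ J) →+ (MvPoly K (Fin n) ⧸ J) := τ.toAddMonoidHom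
  have hτ : ∀ p, τ' (Ideal.Quotient.mk J p) = Ideal.Quotient.mk J (hc K n 0 p) := fun p => rfl
  have hτQ : ∀ (e : ℤ) (x), x ∈ QuotComp K (Fin n) J e → τ' x = if 0 = e then x else 0 := by
    intro e x hx
    have : ∃ p, HomogComp K (Fin n) e p ∧ Ideal.Quotient.mk J p = x := by
      unfold QuotComp at hx
      unfold HomogComp
      split_ifs at hx ⊢ with he
      · obtain ⟨p, hp, rfl⟩ := hx
        exact ⟨p, hp, rfl⟩
      · rw [Submodule.mem_bot] at hx
        exact ⟨0, rfl, by rw [hx, map_zero]⟩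
    obtain ⟨p, hp, rfl⟩ := this
    rw [hτ, hc_of_homog hp]
    split_ifs <;> simp
  have hcomm : ∀ v, aug (piE K n d 0 v) = τ' (aug v) := by
    intro v
    induction v using vec_induction with
    | h0 => simp
    | hadd v w hv hw => simp only [map_add, hv, hw]
    | hm j c t =>
      have h1 := HV.single_monomial (K := K) (d := d) j c t
      rw [piE_of_HV h1, hτQ _ _ (hg _ _ h1)]
      split_ifs <;> simp
  obtain ⟨v, hv⟩ := hs (Ideal.Quotient.mk J 1)
  refine ⟨piE K n d 0 v, piE_HV 0 v, ?_⟩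
  have h1 : HomogComp K (Fin n) 0 (1 : MvPoly K (Fin n)) := by
    have := homogComp_monomial (K := K) (0 : Fin n →₀ ℕ) 1
    simpa using this
  rw [hcomm, hv, hτ, hc_of_homog h1, if_pos rfl]

theorem syz_of_res {J : Ideal (MvPoly K (Fin n))} (F : GradedFreeRes K (Fin n) J) {r : ℤ}
    (hF : ∀ i j, F.dg i j - i ≤ r) (k : ℕ) : ∀ i : ℕ,
    Syz k (r + i + 2) (Fin (F.rk (i + 1))) (F.dg (i + 1)) (LinearMap.ker (F.dmap i)) := by
  induction k with
  | zero => intro i; trivial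
  | succ k ih =>
    intro i
    refine ⟨Fin (F.rk (i + 2)), inferInstance, F.dg (i + 2), F.dmap (i + 1), ?_, ?_, ?_, ?_⟩
    · exact F.graded (i + 1)
    · exact (LinearMap.exact_iff.mp (F.exactS i)).symm
    · intro j
      have := hF (i + 2) j
      push_cast at this
      omega
    · have := ih (i + 1)
      have e : r + ((i + 1 : ℕ) : ℤ) + 2 = r + i + 2 + 1 := by push_cast; ring
      rw [e] at this
      exact this

/-- The canonical graded cover `R → R/J`, with `R` written as vectors over `Fin 1`. -/
noncomputable def quotMap (J : Ideal (MvPoly K (Fin n))) :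
    (Fin 1 → MvPoly K (Fin n)) →ₗ[MvPoly K (Fin n)] (MvPoly K (Fin n) ⧸ J) :=
  J.mkQ ∘ₗ LinearMap.proj 0

/-- A negative bound would put all of `F_0`, hence the image `R/J` of the augmentation, in negative
degrees. -/
theorem nonneg_of_res {J : Ideal (MvPoly K (Fin n))} (hJ : J ≠ ⊤) (F : GradedFreeRes K (Fin n) J)
    {r : ℤ} (hF : ∀ i j, F.dg i j - i ≤ r) : 0 ≤ r := by
  classical
  by_contra hr
  apply hJ
  have h0 : F.aug = 0 := by
    apply (Pi.basisFun (MvPoly K (Fin n)) _).ext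
    intro j
    have := F.aug_graded _ _ (HV.single_one (d := F.dg 0) j)
    have hd := hF 0 j
    unfold QuotComp at this
    rw [if_neg (by push_cast at hd; omega), Submodule.mem_bot] at this
    simpa using this
  rw [Ideal.eq_top_iff_one, ← Ideal.Quotient.eq_zero_iff_mem]
  obtain ⟨v, hv⟩ := F.aug_surj (Ideal.Quotient.mk J 1)
  rw [← hv, h0]
  rfl

/-- Comparing a graded resolution of `R/J` with the cover `R → R/J`, the ideal `J` itself has
partial graded resolutions of every length with twists bounded as in the given one. Here `0 ≤ r`
makes room for the twist `0` of `R`. -/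
theorem syz_start {S : Set (Fin n →₀ ℕ)} {r : ℤ} (hr : 0 ≤ r)
    (F : GradedFreeRes K (Fin n) (Ideal.span (mono K '' S)))
    (hF : ∀ i j, F.dg i j - i ≤ r) (k : ℕ) :
    Syz (k + 2) (r + 1) (Fin 1) (fun _ => 0)
      (LinearMap.ker (quotMap (Ideal.span (mono K '' S)))) := by
  classical
  obtain ⟨f, hf, hCf⟩ := exists_graded_map (d := F.dg 0) (d' := fun _ : Fin 1 => (0 : ℤ)) F.aug
    (quotMap (Ideal.span (mono K '' S))) (by
      intro j
      have := F.aug_graded _ _ (HV.single_one (d := F.dg 0) j)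
      unfold QuotComp at this
      split_ifs at this with h
      · obtain ⟨p, hp, hpe⟩ := this
        refine ⟨fun _ => p, ?_, hpe⟩
        intro _
        unfold HomogComp
        rw [sub_zero, if_pos h]
        exact hp
      · rw [Submodule.mem_bot] at this
        exact ⟨0, fun _ => homogComp_zero, by rw [this, map_zero]⟩)
  obtain ⟨g, hg, hDg⟩ := exists_graded_map (d := fun _ : Fin 1 => (0 : ℤ)) (d' := F.dg 0)
    (quotMap (Ideal.span (mono K '' S))) F.aug (by
      intro j
      obtain ⟨v, hv, hv1⟩ := exists_lift_one (fun _ => hc_mem_span_mono 0) F.aug F.aug_surj F.aug_graded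
      refine ⟨v, hv, ?_⟩
      rw [hv1, Subsingleton.elim j 0]
      simp [quotMap])
  refine syz_ker F.aug (quotMap _) (F.dmap 0) (F.dmap 1) (LinearMap.exact_iff.mp F.exact0).symm
    (LinearMap.exact_iff.mp (F.exactS 0)).symm (F.graded 0) (F.graded 1) f hf hCf g hg hDg ?_ ?_ ?_
    ?_ ?_
  · intro j; have := hF 0 j; push_cast at this; omega
  · intro j; have := hF 1 j; push_cast at this; exact (by omega : F.dg 1 j ≤ r + 1)
  · intro j; have := hF 2 j; push_cast at this; exact (by omega : F.dg 2 j ≤ r + 2)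
  · intro j; omega
  · have := syz_of_res F hF k 1
    have e : r + ((1 : ℕ) : ℤ) + 2 = r + 3 := by push_cast; ring
    rw [e] at this
    exact this

end Start

/-! ### Multigraded free modules -/

section Multi

variable {K : Type} [Field K] {n : ℕ}

/-- The component of multidegree `b` of `⊕_j R(-a j)`, as a space of coefficient vectors. -/
def V (K : Type) [Field K] {n : ℕ} {ι : Type} (a : ι → Fin n →₀ ℕ) (b : Fin n →₀ ℕ) :
    Submodule K (ι → K) where
  carrier := {z | ∀ j, z j ≠ 0 → a j ≤ b}
  zero_mem' j h := absurd rfl h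
  add_mem' {y z} hy hz j h := by
    by_cases h1 : y j = 0
    · exact hz j (by simpa [h1] using h)
    · exact hy j h1
  smul_mem' t z hz j h := hz j (right_ne_zero_of_mul h)

theorem mem_V {ι : Type} {a : ι → Fin n →₀ ℕ} {b : Fin n →₀ ℕ} {z : ι → K} :
    z ∈ V K a b ↔ ∀ j, z j ≠ 0 → a j ≤ b := Iff.rfl

open Classical in
/-- The coefficient vector of the component of multidegree `b`. -/
noncomputable def comp {ι : Type} (a : ι → Fin n →₀ ℕ) (b : Fin n →₀ ℕ) :
    (ι → MvPoly K (Fin n)) →ₗ[K] (ι → K) where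
  toFun v j := if a j ≤ b then coeff (b - a j) (v j) else 0
  map_add' v w := by ext j; simp only [Pi.add_apply, coeff_add]; split_ifs <;> simp
  map_smul' t v := by ext j; simp

open Classical in
theorem comp_apply {ι : Type} (a : ι → Fin n →₀ ℕ) (b : Fin n →₀ ℕ) (v : ι → MvPoly K (Fin n))
    (j : ι) : comp a b v j = if a j ≤ b then coeff (b - a j) (v j) else 0 := rfl

/-- The element of `⊕_j R(-a j)` of multidegree `b` with coefficient vector `z`. -/
noncomputable def hom {ι : Type} (a : ι → Fin n →₀ ℕ) (b : Fin n →₀ ℕ) (z : ι → K) :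
    ι → MvPoly K (Fin n) :=
  fun j => monomial (b - a j) (z j)

variable {ι κ : Type} {a : ι → Fin n →₀ ℕ} {a' : κ → Fin n →₀ ℕ}

theorem comp_mem_V (b : Fin n →₀ ℕ) (v : ι → MvPoly K (Fin n)) : comp a b v ∈ V K a b := by
  intro j h
  rw [comp_apply] at h
  by_contra hne
  rw [if_neg hne] at h
  exact h rfl

theorem comp_ext {v w : ι → MvPoly K (Fin n)} (h : ∀ b, comp a b v = comp a b w) : v = w := by
  ext j c
  have := congrFun (h (c + a j)) j
  simpa [comp_apply] using this

open Classical in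
theorem comp_hom {b b' : Fin n →₀ ℕ} {z : ι → K} (hz : z ∈ V K a b) :
    comp a b' (hom a b z) = if b' = b then z else 0 := by
  ext j
  rw [comp_apply, hom]
  by_cases hzj : z j = 0
  · simp only [hzj, map_zero, coeff_zero]; split_ifs <;> simp [hzj]
  have hab := hz j hzj
  rw [coeff_monomial]
  by_cases hb : b' = b
  · subst hb; simp [hab]
  · rw [if_neg hb]
    split_ifs with h1 h2
    · exfalso; apply hb
      rw [← tsub_add_cancel_of_le h1, ← h2, tsub_add_cancel_of_le hab]
    · rfl
    · rfl

/-- A coefficient matrix is compatible with the multidegrees: `x^(a' x - a j)` exists wherever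
the entry at `(j, x)` is nonzero. -/
def Compat [DecidableEq κ] (a : ι → Fin n →₀ ℕ) (a' : κ → Fin n →₀ ℕ)
    (lam : (κ → K) →ₗ[K] (ι → K)) : Prop :=
  ∀ x, lam (Pi.single x 1) ∈ V K a (a' x)

/-- The multigraded map of free modules with coefficient matrix `lam`. -/
noncomputable def poly [Fintype κ] [DecidableEq κ] (a : ι → Fin n →₀ ℕ) (a' : κ → Fin n →₀ ℕ)
    (lam : (κ → K) →ₗ[K] (ι → K)) :
    (κ → MvPoly K (Fin n)) →ₗ[MvPoly K (Fin n)] (ι → MvPoly K (Fin n)) :=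
  Fintype.linearCombination (MvPoly K (Fin n)) fun x => hom a (a' x) (lam (Pi.single x 1))

theorem comp_single [DecidableEq κ] (x : κ) (c b : Fin n →₀ ℕ) (t : K) :
    comp a' b (Pi.single x (monomial c t)) = if c + a' x = b then t • Pi.single x 1 else 0 := by
  classical
  ext y
  rw [comp_apply]
  by_cases hy : y = x
  · subst hy
    rw [Pi.single_eq_same, coeff_monomial]
    by_cases h : c + a' y = b
    · subst h; simp
    · rw [if_neg h]
      split_ifs with h1 h2
      · exact absurd (by rw [h2, tsub_add_cancel_of_le h1]) h
      · rfl
      · rfl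
  · rw [Pi.single_eq_of_ne hy]
    split_ifs <;> simp [hy]

variable [Fintype κ] [DecidableEq κ] {lam : (κ → K) →ₗ[K] (ι → K)}

theorem comp_poly (hlam : Compat a a' lam) (b : Fin n →₀ ℕ) (v : κ → MvPoly K (Fin n)) :
    comp a b (poly a a' lam v) = lam (comp a' b v) := by
  induction v using vec_induction with
  | h0 => simp
  | hadd v w hv hw => simp only [map_add, hv, hw]
  | hm x c t =>
    rw [comp_single, poly, Fintype.linearCombination_apply_single]
    have : (monomial c t : MvPoly K (Fin n)) • hom a (a' x) (lam (Pi.single x 1)) =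
        hom a (c + a' x) (t • lam (Pi.single x 1)) := by
      ext1 j
      simp only [Pi.smul_apply, smul_eq_mul, hom, monomial_mul]
      by_cases h0 : lam (Pi.single x 1) j = 0
      · simp [h0]
      · rw [add_tsub_assoc_of_le (hlam x j h0)]
    rw [this, comp_hom]
    · by_cases h : c + a' x = b
      · simp [h]
      · rw [if_neg h, if_neg (Ne.symm h), map_zero]
    · refine Submodule.smul_mem _ _ fun j hj => (hlam x j hj).trans ?_
      exact le_add_self

theorem Compat.map_V (hlam : Compat a a' lam) {b : Fin n →₀ ℕ} {y : κ → K} (hy : y ∈ V K a' b) :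
    lam y ∈ V K a b := by
  have := comp_mem_V (a := a) b (poly a a' lam (hom a' b y))
  classical
  rwa [comp_poly hlam, comp_hom hy, if_pos rfl] at this

/-- Membership in the image of a multigraded map can be tested in each multidegree. -/
theorem mem_range_poly [Fintype ι] (hlam : Compat a a' lam) {v : ι → MvPoly K (Fin n)} :
    v ∈ LinearMap.range (poly a a' lam) ↔ ∀ b, ∃ y ∈ V K a' b, lam y = comp a b v := by
  classical
  constructor
  · rintro ⟨w, rfl⟩ b
    exact ⟨comp a' b w, comp_mem_V b w, (comp_poly hlam b w).symm⟩
  · intro h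
    choose y hy hly using h
    -- the finitely many multidegrees in which `v` has a component
    let T : Finset (Fin n →₀ ℕ) := Finset.univ.biUnion fun j => (v j).support.image (· + a j)
    refine ⟨∑ b ∈ T, hom a' b (y b), comp_ext (a := a) fun b => ?_⟩
    rw [comp_poly hlam, map_sum]
    simp only [comp_hom (hy _)]
    rw [Finset.sum_ite_eq]
    split_ifs with hb
    · exact hly b
    · rw [map_zero]
      ext j
      rw [comp_apply]
      split_ifs with h1
      · by_contra hne
        apply hb
        rw [Finset.mem_biUnion]
        refine ⟨j, Finset.mem_univ j, Finset.mem_image.mpr ⟨b - a j, ?_, tsub_add_cancel_of_le h1⟩⟩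
        rw [mem_support_iff]
        exact Ne.symm hne
      · rfl

theorem mem_ker_poly (hlam : Compat a a' lam) {v : κ → MvPoly K (Fin n)} :
    v ∈ LinearMap.ker (poly a a' lam) ↔ ∀ b, lam (comp a' b v) = 0 := by
  rw [LinearMap.mem_ker]
  constructor
  · intro h b
    rw [← comp_poly hlam, h, map_zero]
  · intro h
    apply comp_ext (a := a)
    intro b
    rw [comp_poly hlam, h, map_zero]

theorem hom_HV {b : Fin n →₀ ℕ} {z : ι → K} (hz : z ∈ V K a b) :
    HV (fun j => ((a j).degree : ℤ)) b.degree (hom a b z) := by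
  intro j
  by_cases h : z j = 0
  · simp only [hom, h, map_zero]; exact homogComp_zero
  · have := homogComp_monomial (b - a j) (z j)
    have e : ((b - a j).degree : ℤ) = b.degree - (a j).degree := by
      have := congrArg Finsupp.degree (tsub_add_cancel_of_le (hz j h))
      rw [map_add] at this
      omega
    rw [e] at this
    exact this

theorem poly_graded (hlam : Compat a a' lam) :
    Gr (fun x => ((a' x).degree : ℤ)) (fun j => ((a j).degree : ℤ)) (poly a a' lam) :=
  gr_linearCombination fun x => hom_HV (hlam x)

theorem comp_eq_zero_of_HV {e : ℤ} {v : ι → MvPoly K (Fin n)}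
    (hv : HV (fun j => ((a j).degree : ℤ)) e v) {b : Fin n →₀ ℕ} (hb : (b.degree : ℤ) ≠ e) :
    comp a b v = 0 := by
  ext j
  rw [comp_apply]
  split_ifs with h
  · by_contra hne
    have h1 : ((b - a j).degree : ℤ) = e - (a j).degree := homogComp_iff.mp (hv j) _ hne
    have := congrArg Finsupp.degree (tsub_add_cancel_of_le h)
    rw [map_add] at this
    omega
  · rfl

end Multi

/-! ### Multigraded resolutions -/

/-- A multigraded free module `⊕_j R(-a j)` together with a multigraded submodule, given by its
component `N b` in each multidegree `b`. -/
structure St (K : Type) [Field K] (n : ℕ) where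
  m : ℕ
  a : Fin m → Fin n →₀ ℕ
  N : (Fin n →₀ ℕ) → Submodule K (Fin m → K)

section MRes

variable {K : Type} [Field K] {n : ℕ}

/-- `lam` is the coefficient matrix of a multigraded map onto the submodule `s.N`, with kernel
`s'.N`. -/
def IsCover (s s' : St K n) (lam : (Fin s'.m → K) →ₗ[K] (Fin s.m → K)) : Prop :=
  Compat s.a s'.a lam ∧ (∀ b z, z ∈ s.N b ↔ ∃ y ∈ V K s'.a b, lam y = z) ∧
    ∀ b y, y ∈ s'.N b ↔ y ∈ V K s'.a b ∧ lam y = 0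

theorem IsCover.mem_range {s s' : St K n} {lam : (Fin s'.m → K) →ₗ[K] (Fin s.m → K)}
    (h : IsCover s s' lam) (v : Fin s.m → MvPoly K (Fin n)) :
    v ∈ LinearMap.range (poly s.a s'.a lam) ↔ ∀ b, comp s.a b v ∈ s.N b := by
  rw [mem_range_poly h.1]
  exact forall_congr' fun b => (h.2.1 b _).symm

theorem IsCover.mem_ker {s s' : St K n} {lam : (Fin s'.m → K) →ₗ[K] (Fin s.m → K)}
    (h : IsCover s s' lam) (v : Fin s'.m → MvPoly K (Fin n)) :
    v ∈ LinearMap.ker (poly s.a s'.a lam) ↔ ∀ b, comp s'.a b v ∈ s'.N b := by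
  rw [mem_ker_poly h.1]
  refine forall_congr' fun b => ?_
  rw [h.2.2]
  exact ⟨fun h => ⟨comp_mem_V b v, h⟩, fun h => h.2⟩

/-- A multigraded free resolution of `R/J`, where `U` is the set of exponents of monomials in `J`,
with all multidegrees in homological degree `i` of total degree at most `r + i`. -/
structure MRes (K : Type) [Field K] {n : ℕ} (U : Set (Fin n →₀ ℕ)) (r : ℤ) where
  st : ℕ → St K n
  lam : ∀ i, (Fin (st (i + 1)).m → K) →ₗ[K] (Fin (st i).m → K)
  cover : ∀ i, IsCover (st i) (st (i + 1)) (lam i)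
  m0 : (st 0).m = 1
  a0 : ∀ j, (st 0).a j = 0
  N0 : ∀ b z, z ∈ (st 0).N b ↔ b ∈ U ∨ z = 0
  bound : ∀ i j, (((st i).a j).degree : ℤ) ≤ r + i

/-- Exponents of the monomials in the ideal generated by the monomials with exponents in `S`. -/
def up {n : ℕ} (S : Set (Fin n →₀ ℕ)) : Set (Fin n →₀ ℕ) := {b | ∃ a ∈ S, a ≤ b}

theorem MRes.resBound {S : Set (Fin n →₀ ℕ)} {r : ℤ} (F : MRes K (up S) r) :
    ResBound K (Fin n) (Ideal.span (mono K '' S)) r := by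
  classical
  have : Unique (Fin (F.st 0).m) := by rw [F.m0]; infer_instance
  let sumMap : (Fin (F.st 0).m → MvPoly K (Fin n)) →ₗ[MvPoly K (Fin n)] MvPoly K (Fin n) :=
    LinearMap.proj default
  refine ⟨{ rk := fun i => (F.st i).m
            dg := fun i j => (((F.st i).a j).degree : ℤ)
            dmap := fun i => poly (F.st i).a (F.st (i + 1)).a (F.lam i)
            aug := (Ideal.span (mono K '' S)).mkQ ∘ₗ sumMap
            aug_surj := ?_
            exact0 := ?_
            exactS := ?_
            graded := fun i => poly_graded (F.cover i).1
            aug_graded := ?_ }, ?_⟩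
  · intro x
    obtain ⟨p, rfl⟩ := Submodule.mkQ_surjective _ x
    exact ⟨fun _ => p, rfl⟩
  · rw [LinearMap.exact_iff]
    ext v
    rw [(F.cover 0).mem_range, LinearMap.mem_ker, LinearMap.comp_apply, Submodule.mkQ_apply,
      Submodule.Quotient.mk_eq_zero, mem_span_mono]
    refine forall_congr' fun b => ?_
    rw [F.N0]
    have h0 : comp (F.st 0).a b v = 0 ↔ coeff b (v default) = 0 := by
      constructor
      · intro h
        have := congrFun h default
        simpa [comp_apply, F.a0] using this
      · intro h
        ext j
        rw [Subsingleton.elim j default]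
        simpa [comp_apply, F.a0] using h
    rw [h0]
    change (coeff b (v default) ≠ 0 → b ∈ up S) ↔ _
    tauto
  · intro i
    rw [LinearMap.exact_iff]
    ext v
    rw [(F.cover (i + 1)).mem_range, (F.cover i).mem_ker]
  · intro e v hv
    have h := hv default
    simp only [F.a0, map_zero, Nat.cast_zero, sub_zero] at h
    unfold QuotComp
    unfold HomogComp at h
    split_ifs at h ⊢ with he
    · exact ⟨v default, h, rfl⟩
    · rw [Submodule.mem_bot, LinearMap.comp_apply]
      change Submodule.mkQ _ (v default) = 0
      rw [h, map_zero]
  · intro i j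
    have := F.bound i j
    simp only
    omega

/-- Relabelling multidegrees along a Galois connection `ψ ⊣ φ` turns a multigraded resolution into
another one, with the same coefficient matrices: the new component of multidegree `b` is the old
component of multidegree `φ b`. -/
def MRes.relabel {U : Set (Fin n →₀ ℕ)} {r : ℤ} (F : MRes K U r)
    {ψ φ : (Fin n →₀ ℕ) → (Fin n →₀ ℕ)} (hgc : GaloisConnection ψ φ) {k : ℕ}
    (hk : ∀ a, (ψ a).degree ≤ a.degree + k) (h0 : ψ 0 = 0) : MRes K (φ ⁻¹' U) (r + k) where
  st i := ⟨(F.st i).m, fun j => ψ ((F.st i).a j), fun b => (F.st i).N (φ b)⟩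
  lam i := F.lam i
  cover i := by
    have hV : ∀ i b (z : Fin (F.st i).m → K),
        z ∈ V K (fun j => ψ ((F.st i).a j)) b ↔ z ∈ V K (F.st i).a (φ b) :=
      fun i b z => forall_congr' fun j => imp_congr_right fun _ => hgc _ _
    obtain ⟨h1, h2, h3⟩ := F.cover i
    refine ⟨fun x j h => hgc.monotone_l (h1 x j h), fun b z => ?_, fun b y => ?_⟩
    · refine (h2 (φ b) z).trans (exists_congr fun y => and_congr_left fun _ => ?_)
      exact (hV (i + 1) b y).symm
    · refine (h3 (φ b) y).trans (and_congr_left fun _ => ?_)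
      exact (hV (i + 1) b y).symm
  m0 := F.m0
  a0 j := (congrArg ψ (F.a0 j)).trans h0
  N0 b z := F.N0 (φ b) z
  bound i j := by
    have h1 := hk ((F.st i).a j)
    have h2 := F.bound i j
    simp only
    omega

/-- Dependent choice for multigraded resolutions: an invariant that passes from each submodule to
the kernel of some cover of it yields an infinite resolution. -/
theorem exists_seq (Inv : ℕ → St K n → Prop) {s0 : St K n} (h0 : Inv 0 s0)
    (hstep : ∀ i s, Inv i s → ∃ (s' : St K n) (lam : (Fin s'.m → K) →ₗ[K] (Fin s.m → K)),
      IsCover s s' lam ∧ Inv (i + 1) s') :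
    ∃ (st : ℕ → St K n) (lam : ∀ i, (Fin (st (i + 1)).m → K) →ₗ[K] (Fin (st i).m → K)),
      st 0 = s0 ∧ (∀ i, IsCover (st i) (st (i + 1)) (lam i)) ∧ ∀ i, Inv i (st i) := by
  choose next lam hc hi using hstep
  let seq : ∀ i, {s : St K n // Inv i s} := fun i =>
    Nat.rec ⟨s0, h0⟩ (fun i s => ⟨next i s.1 s.2, hi i s.1 s.2⟩) i
  exact ⟨fun i => (seq i).1, fun i => lam i (seq i).1 (seq i).2, rfl,
    fun i => hc i (seq i).1 (seq i).2, fun i => (seq i).2⟩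

/-- Homogeneous generators spanning the components `N b` for the finitely many `b ∈ T`. -/
theorem exists_gens {m : ℕ} (N : (Fin n →₀ ℕ) → Submodule K (Fin m → K))
    (T : Finset (Fin n →₀ ℕ)) :
    ∃ (m' : ℕ) (a' : Fin m' → Fin n →₀ ℕ) (lam : (Fin m' → K) →ₗ[K] (Fin m → K)),
      (∀ x, a' x ∈ T) ∧ (∀ x, lam (Pi.single x 1) ∈ N (a' x)) ∧
      ∀ b ∈ T, ∀ z ∈ N b, ∃ y, (∀ x, y x ≠ 0 → a' x = b) ∧ lam y = z := by
  classical
  let X := Σ b : T, Fin (Module.finrank K (N b))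
  let e : X ≃ Fin (Fintype.card X) := Fintype.equivFin X
  let w : X → (Fin m → K) := fun x => (Module.finBasis K (N x.1) x.2 : Fin m → K)
  refine ⟨Fintype.card X, fun x => ((e.symm x).1 : Fin n →₀ ℕ),
    Fintype.linearCombination K fun x => w (e.symm x), fun x => (e.symm x).1.2, fun x => ?_, ?_⟩
  · rw [Fintype.linearCombination_apply_single, one_smul]
    exact (Module.finBasis K (N (e.symm x).1) (e.symm x).2).2
  · intro b hb z hz
    let y : X → K := fun x => if h : (x.1 : Fin n →₀ ℕ) = b then
      (Module.finBasis K (N x.1)).repr ⟨z, by rw [h]; exact hz⟩ x.2 else 0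
    refine ⟨fun x => y (e.symm x), ?_, ?_⟩
    · intro x hx
      by_contra hne
      exact hx (dif_neg hne)
    · rw [Fintype.linearCombination_apply]
      rw [Equiv.sum_comp e.symm (fun x => y x • w x), Fintype.sum_sigma,
        Finset.sum_eq_single (⟨b, hb⟩ : T)]
      · have h := congrArg (N b).subtype ((Module.finBasis K (N b)).sum_repr ⟨z, hz⟩)
        rw [map_sum] at h
        refine Eq.trans (Finset.sum_congr rfl fun k _ => ?_) h
        simp only [y, w, dif_pos, map_smul]
        rfl
      · intro c _ hc
        have hc' : (c : Fin n →₀ ℕ) ≠ b := fun h => hc (Subtype.ext h)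
        apply Finset.sum_eq_zero
        intro k _
        simp [y, hc']
      · simp

/-- The free module `R` with the monomial ideal whose exponents are `U`. -/
abbrev st0 (K : Type) [Field K] {n : ℕ} (U : Set (Fin n →₀ ℕ)) : St K n where
  m := 1
  a _ := 0
  N b :=
    { carrier := {z | b ∈ U ∨ z = 0}
      zero_mem' := Or.inr rfl
      add_mem' := by
        rintro x y (hx | rfl) (hy | rfl)
        · exact Or.inl hx
        · exact Or.inl hx
        · exact Or.inl hy
        · exact Or.inr (add_zero 0)
      smul_mem' := by
        rintro t x (hx | rfl)
        · exact Or.inl hx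
        · exact Or.inr (smul_zero t) }

theorem mem_st0 {U : Set (Fin n →₀ ℕ)} (b : Fin n →₀ ℕ) (z : Fin 1 → K) :
    z ∈ (st0 K U).N b ↔ b ∈ U ∨ z = 0 := Iff.rfl

/-- Every monomial ideal has a multigraded resolution with multidegrees bounded by the join `c` of
the generators: all components in multidegree `b` agree with those in multidegree `b ⊓ c`. -/
theorem exists_mres (S : Finset (Fin n →₀ ℕ)) :
    ∃ r, Nonempty (MRes K (up (S : Set (Fin n →₀ ℕ))) r) := by
  classical
  let c : Fin n →₀ ℕ := S.sup id
  let Inv : ℕ → St K n → Prop := fun _ s => (∀ j, s.a j ≤ c) ∧ (∀ b, s.N b ≤ V K s.a b) ∧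
    (∀ b, s.N b ≤ s.N (b ⊓ c)) ∧ Monotone s.N
  have h0 : Inv 0 (st0 K (up (S : Set (Fin n →₀ ℕ)))) := by
    refine ⟨fun _ => zero_le, fun b z _ j _ => zero_le, fun b z => ?_, fun b b' hb z => ?_⟩
    · rw [mem_st0, mem_st0]
      refine Or.imp_left ?_
      rintro ⟨a, ha, hab⟩
      exact ⟨a, ha, le_inf hab (Finset.le_sup (f := id) ha)⟩
    · rw [mem_st0, mem_st0]
      refine Or.imp_left ?_
      rintro ⟨a, ha, hab⟩
      exact ⟨a, ha, hab.trans hb⟩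
  obtain ⟨st, lam, hst0, hcov, hinv⟩ := exists_seq Inv h0 (by
    rintro i s ⟨h1, h2, h3, h4⟩
    obtain ⟨m', a', lam, g1, g2, g3⟩ := exists_gens s.N (Finset.Iic c)
    have ha' : ∀ x, a' x ≤ c := fun x => Finset.mem_Iic.mp (g1 x)
    refine ⟨⟨m', a', fun b => V K a' b ⊓ LinearMap.ker lam⟩, lam,
      ⟨fun x => h2 _ (g2 x), fun b z => ⟨fun hz => ?_, ?_⟩, fun b y => Iff.rfl⟩,
      ha', fun b => inf_le_left, fun b y hy => ⟨fun x hx => le_inf (hy.1 x hx) (ha' x), hy.2⟩,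
      fun b b' hb y hy => ⟨fun x hx => (hy.1 x hx).trans hb, hy.2⟩⟩
    · obtain ⟨y, hy, hyz⟩ := g3 (b ⊓ c) (Finset.mem_Iic.mpr inf_le_right) z (h3 b hz)
      refine ⟨y, fun x hx => ?_, hyz⟩
      exact (hy x hx).le.trans inf_le_left
    · rintro ⟨y, hy, rfl⟩
      have e : y = ∑ x, y x • (Pi.single x 1 : Fin m' → K) := by
        conv_lhs => rw [← Finset.univ_sum_single y]
        simp [← Pi.single_smul]
      rw [e, map_sum]
      refine Submodule.sum_mem _ fun x _ => ?_
      rw [map_smul]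
      by_cases hx : y x = 0
      · rw [hx, zero_smul]; exact Submodule.zero_mem _
      · exact Submodule.smul_mem _ _ (h4 (hy x hx) (g2 x)))
  refine ⟨c.degree, ⟨⟨st, lam, hcov, by rw [hst0], ?_, ?_, fun i j => ?_⟩⟩⟩
  · rw [hst0]; intro j; rfl
  · rw [hst0]; exact mem_st0
  · have h1 := (hinv i).1 j
    have h2 : ((st i).a j).degree ≤ c.degree := by
      rw [← tsub_add_cancel_of_le h1, map_add]
      exact Nat.le_add_left _ _
    omega

theorem mem_ker_quotMap {S : Set (Fin n →₀ ℕ)} (v : Fin 1 → MvPoly K (Fin n)) :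
    v ∈ LinearMap.ker (quotMap (Ideal.span (mono K '' S))) ↔
      ∀ b, b ∈ up S ∨ comp (fun _ : Fin 1 => (0 : Fin n →₀ ℕ)) b v = 0 := by
  rw [LinearMap.mem_ker, quotMap, LinearMap.comp_apply, Submodule.mkQ_apply,
    Submodule.Quotient.mk_eq_zero, mem_span_mono]
  refine forall_congr' fun b => ?_
  have h0 : comp (fun _ : Fin 1 => (0 : Fin n →₀ ℕ)) b v = 0 ↔ coeff b (v 0) = 0 := by
    constructor
    · intro h
      have := congrFun h 0
      simpa [comp_apply] using this
    · intro h
      ext j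
      rw [Subsingleton.elim j (0 : Fin 1)]
      simpa [comp_apply] using h
  rw [h0]
  change (coeff b (v 0) ≠ 0 → b ∈ up S) ↔ _
  tauto

/-- The invariant along which a multigraded resolution is built from a `ℤ`-graded one: the
submodule still to be covered has a partial `ℤ`-graded resolution of every length, with twists
bounded by those of the given resolution. -/
def Inv (r : ℤ) (i : ℕ) (s : St K n) : Prop :=
  (∀ j, ((s.a j).degree : ℤ) ≤ r + i) ∧ (∀ b, s.N b ≤ V K s.a b) ∧
    ∃ M : Submodule (MvPoly K (Fin n)) (Fin s.m → MvPoly K (Fin n)),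
      (∀ v, v ∈ M ↔ ∀ b, comp s.a b v ∈ s.N b) ∧
      ∀ k, Syz (k + 2) (r + i + 1) (Fin s.m) (fun j => ((s.a j).degree : ℤ)) M

theorem inv_zero {S : Set (Fin n →₀ ℕ)} {r : ℤ} (hr : 0 ≤ r)
    (F : GradedFreeRes K (Fin n) (Ideal.span (mono K '' S))) (hF : ∀ i j, F.dg i j - i ≤ r) :
    Inv r 0 (st0 K (up S)) := by
  refine ⟨fun j => by simpa using hr, fun b z _ j _ => zero_le,
    LinearMap.ker (quotMap (Ideal.span (mono K '' S))), mem_ker_quotMap, fun k => ?_⟩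
  have e : (fun _ : Fin 1 => (((0 : Fin n →₀ ℕ).degree : ℕ) : ℤ)) = fun _ => 0 := by
    funext; simp
  have e' : r + ((0 : ℕ) : ℤ) + 1 = r + 1 := by simp
  change Syz (k + 2) (r + ((0 : ℕ) : ℤ) + 1) (Fin 1)
    (fun _ : Fin 1 => (((0 : Fin n →₀ ℕ).degree : ℕ) : ℤ)) _
  rw [e, e']
  exact syz_start hr F hF k

/-- If the multigraded submodule `M` is generated in degrees at most `ρ`, homogeneous elements that
span its components of degree at most `ρ` generate it. -/
theorem range_poly_eq {ρ : ℤ} {m m' : ℕ} {a : Fin m → Fin n →₀ ℕ} {a' : Fin m' → Fin n →₀ ℕ}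
    {N : (Fin n →₀ ℕ) → Submodule K (Fin m → K)} (hNV : ∀ b, N b ≤ V K a b)
    {M : Submodule (MvPoly K (Fin n)) (Fin m → MvPoly K (Fin n))}
    (hM : ∀ v, v ∈ M ↔ ∀ b, comp a b v ∈ N b)
    (hsyz : Syz 1 ρ (Fin m) (fun j => ((a j).degree : ℤ)) M)
    {lam : (Fin m' → K) →ₗ[K] (Fin m → K)} (g2 : ∀ x, lam (Pi.single x 1) ∈ N (a' x))
    (g3 : ∀ b : Fin n →₀ ℕ, (b.degree : ℤ) ≤ ρ → ∀ z ∈ N b,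
      ∃ y, (∀ x, y x ≠ 0 → a' x = b) ∧ lam y = z) :
    LinearMap.range (poly a a' lam) = M := by
  classical
  have hcompat : Compat a a' lam := fun x => hNV _ (g2 x)
  apply le_antisymm
  · rintro _ ⟨v, rfl⟩
    rw [poly, Fintype.linearCombination_apply]
    refine Submodule.sum_mem _ fun x _ => Submodule.smul_mem _ _ ?_
    rw [hM]
    intro b
    rw [comp_hom (hcompat x)]
    split_ifs with hb
    · rw [hb]; exact g2 x
    · exact Submodule.zero_mem _
  · obtain ⟨ι, _, d, D, gD, rD, bD, -⟩ := hsyz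
    rintro v hv
    rw [← rD] at hv
    obtain ⟨v, rfl⟩ := hv
    have hv : D v = ∑ j, v j • D (Pi.single j 1) := by
      conv_lhs => rw [← Finset.univ_sum_single v]
      rw [map_sum]
      refine Finset.sum_congr rfl fun j _ => ?_
      rw [← map_smul, ← Pi.single_smul, smul_eq_mul, mul_one]
    rw [hv]
    refine Submodule.sum_mem _ fun j _ => Submodule.smul_mem _ _ ?_
    rw [mem_range_poly hcompat]
    intro b
    have hj := gD _ _ (HV.single_one (d := d) j)
    by_cases hb : (b.degree : ℤ) = d j
    · have hmem : D (Pi.single j 1) ∈ M := rD ▸ LinearMap.mem_range_self D _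
      have hle := bD j
      obtain ⟨y, hy, hyz⟩ := g3 b (by omega) _ ((hM _).mp hmem b)
      exact ⟨y, fun x hx => (hy x hx).le, hyz⟩
    · refine ⟨0, Submodule.zero_mem _, ?_⟩
      rw [comp_eq_zero_of_HV hj hb, map_zero]

theorem isCover_of_range {m m' : ℕ} {a : Fin m → Fin n →₀ ℕ} {a' : Fin m' → Fin n →₀ ℕ}
    {N : (Fin n →₀ ℕ) → Submodule K (Fin m → K)} (hNV : ∀ b, N b ≤ V K a b)
    {M : Submodule (MvPoly K (Fin n)) (Fin m → MvPoly K (Fin n))}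
    (hM : ∀ v, v ∈ M ↔ ∀ b, comp a b v ∈ N b)
    {lam : (Fin m' → K) →ₗ[K] (Fin m → K)} (hcompat : Compat a a' lam)
    (hrange : LinearMap.range (poly a a' lam) = M) :
    IsCover ⟨m, a, N⟩ ⟨m', a', fun b => V K a' b ⊓ LinearMap.ker lam⟩ lam := by
  classical
  refine ⟨hcompat, fun b z => ⟨fun hz => ?_, ?_⟩, fun b y => Iff.rfl⟩
  · have hzV : z ∈ V K a b := hNV b hz
    have hmem : hom a b z ∈ LinearMap.range (poly a a' lam) := by
      rw [hrange, hM]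
      intro b'
      rw [comp_hom hzV]
      split_ifs with hb
      · rw [hb]; exact hz
      · exact Submodule.zero_mem _
    obtain ⟨y, hy, hyz⟩ := (mem_range_poly hcompat).mp hmem b
    rw [comp_hom hzV, if_pos rfl] at hyz
    exact ⟨y, hy, hyz⟩
  · rintro ⟨y, hy, rfl⟩
    have hyV : y ∈ V K a' b := hy
    have hmem : poly a a' lam (hom a' b y) ∈ M := hrange ▸ LinearMap.mem_range_self _ _
    have h := (hM _).mp hmem b
    rw [comp_poly hcompat, comp_hom hyV, if_pos rfl] at h
    exact h

theorem syz_of_add_two {κ : Type} {dκ : κ → ℤ} {r : ℤ}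
    {N : Submodule (MvPoly K (Fin n)) (κ → MvPoly K (Fin n))}
    (h : ∀ k, Syz (k + 2) r κ dκ N) (k : ℕ) : Syz k r κ dκ N := by
  rcases k with _ | _ | k
  · trivial
  · obtain ⟨ι, i1, d, D, h1, h2, h3, -⟩ := h 0
    exact ⟨ι, i1, d, D, h1, h2, h3, trivial⟩
  · exact h k

/-- If the submodule to be covered is generated in degrees at most `r + i + 1`, it is covered by
generators spanning its components of total degree at most `r + i + 1`, and the kernel of this
cover again has bounded `ℤ`-graded partial resolutions. -/
theorem Inv.step {r : ℤ} {i : ℕ} {s : St K n} (h : Inv r i s) :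
    ∃ (s' : St K n) (lam : (Fin s'.m → K) →ₗ[K] (Fin s.m → K)),
      IsCover s s' lam ∧ Inv r (i + 1) s' := by
  obtain ⟨m, a, N⟩ := s
  obtain ⟨-, h2, M, hM, hsyz⟩ := h
  simp only at h2 hM
  have hfin : {b : Fin n →₀ ℕ | (b.degree : ℤ) ≤ r + i + 1}.Finite :=
    (Finsupp.finite_of_degree_le (r + i + 1).toNat).subset fun b hb => by
      simp only [Set.mem_ofPred_eq] at hb ⊢
      omega
  obtain ⟨m', a', lam, g1, g2, g3⟩ := exists_gens N hfin.toFinset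
  simp only [Set.Finite.mem_toFinset, Set.mem_ofPred_eq] at g1 g3
  have hsyz' : ∀ k, Syz k (r + i + 1) (Fin m) (fun j => ((a j).degree : ℤ)) M :=
    syz_of_add_two hsyz
  have hcompat : Compat a a' lam := fun x => h2 _ (g2 x)
  have hrange := range_poly_eq h2 hM (hsyz' 1) g2 g3
  have hcover := isCover_of_range h2 hM hcompat hrange
  have e : r + ((i + 1 : ℕ) : ℤ) = r + i + 1 := by push_cast; ring
  have hs : ∀ k, Syz (k + 2) (r + ((i + 1 : ℕ) : ℤ) + 1) (Fin m')
      (fun j => ((a' j).degree : ℤ)) (LinearMap.ker (poly a a' lam)) := by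
    intro k
    rw [e]
    exact syz_ker_of_cover hsyz' (poly_graded hcompat) hrange (fun j => (g1 j).trans (by omega)) _
  have hinv : Inv r (i + 1) ⟨m', a', fun b => V K a' b ⊓ LinearMap.ker lam⟩ :=
    ⟨by rw [e]; exact g1, fun b => inf_le_left, LinearMap.ker (poly a a' lam), hcover.mem_ker, hs⟩
  exact ⟨_, lam, hcover, hinv⟩

/-- A `ℤ`-graded resolution of `R/J` can be replaced by a multigraded one with the same bound. -/
theorem exists_mres_of_resBound {S : Set (Fin n →₀ ℕ)} {r : ℤ} (hr : 0 ≤ r)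
    (h : ResBound K (Fin n) (Ideal.span (mono K '' S)) r) : Nonempty (MRes K (up S) r) := by
  obtain ⟨F, hF⟩ := h
  obtain ⟨st, lam, hst0, hcov, hinv⟩ :=
    exists_seq (Inv r) (inv_zero hr F hF) fun i s h => h.step
  refine ⟨⟨st, lam, hcov, by rw [hst0], ?_, ?_, fun i => (hinv i).1⟩⟩
  · rw [hst0]; intro j; rfl
  · rw [hst0]; exact mem_st0

end MRes


/-! ### Transfer of resolutions and comparison of regularities -/

section Transfer

variable {K : Type} [Field K] {n : ℕ}

/-- The zero module has the zero resolution, which satisfies every bound. -/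
theorem resBound_top (r : ℤ) : ResBound K (Fin n) (⊤ : Ideal (MvPoly K (Fin n))) r := by
  have hsub : Subsingleton (MvPoly K (Fin n) ⧸ (⊤ : Ideal (MvPoly K (Fin n)))) :=
    Submodule.Quotient.subsingleton_iff.mpr rfl
  refine ⟨{ rk := fun _ => 0
            dg := fun _ j => j.elim0
            dmap := fun _ => 0
            aug := 0
            aug_surj := fun x => ⟨0, Subsingleton.elim _ _⟩
            exact0 := fun v => ⟨fun _ => ⟨0, Subsingleton.elim _ _⟩, fun _ => Subsingleton.elim _ _⟩
            exactS := fun i v =>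
              ⟨fun _ => ⟨0, Subsingleton.elim _ _⟩, fun _ => Subsingleton.elim _ _⟩
            graded := fun i e v _ j => j.elim0
            aug_graded := fun e v _ => by
              rw [LinearMap.zero_apply]
              exact Submodule.zero_mem _ }, fun i j => j.elim0⟩

theorem span_mono_eq_top {S : Set (Fin n →₀ ℕ)} :
    Ideal.span (mono K '' S) = ⊤ ↔ (0 : Fin n →₀ ℕ) ∈ S := by
  classical
  rw [Ideal.eq_top_iff_one, mem_span_mono]
  constructor
  · intro h
    obtain ⟨a, ha, h0⟩ := h 0 (by simp)
    rwa [nonpos_iff_eq_zero.mp h0] at ha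
  · intro h c _
    exact ⟨0, h, zero_le⟩

theorem up_image {ψ φ : (Fin n →₀ ℕ) → (Fin n →₀ ℕ)} (hgc : GaloisConnection ψ φ)
    (S : Set (Fin n →₀ ℕ)) : up (ψ '' S) = φ ⁻¹' up S := by
  ext b
  constructor
  · rintro ⟨_, ⟨a, ha, rfl⟩, hab⟩
    exact ⟨a, ha, (hgc _ _).mp hab⟩
  · rintro ⟨a, ha, hab⟩
    exact ⟨ψ a, ⟨a, ha, rfl⟩, (hgc _ _).mpr hab⟩

/-- Applying the lower adjoint of a Galois connection to the exponents of the generators changes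
the bound on the twists by at most the amount by which it raises degrees. -/
theorem resBound_image {ψ φ : (Fin n →₀ ℕ) → (Fin n →₀ ℕ)} (hgc : GaloisConnection ψ φ) {k : ℕ}
    (hk : ∀ a, (ψ a).degree ≤ a.degree + k) (h0 : ψ 0 = 0) {S : Set (Fin n →₀ ℕ)} {r : ℤ}
    (h : ResBound K (Fin n) (Ideal.span (mono K '' S)) r) :
    ResBound K (Fin n) (Ideal.span (mono K '' (ψ '' S))) (r + k) := by
  by_cases htop : Ideal.span (mono K '' S) = ⊤
  · rw [span_mono_eq_top] at htop
    rw [(span_mono_eq_top (S := ψ '' S)).mpr ⟨0, htop, h0⟩]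
    exact resBound_top _
  · have hr : 0 ≤ r := by
      obtain ⟨F, hF⟩ := h
      exact nonneg_of_res htop F hF
    obtain ⟨F⟩ := exists_mres_of_resBound hr h
    have F' := F.relabel hgc hk h0
    rw [← up_image hgc] at F'
    exact F'.resBound

/-- If the bounds for `I` have no least element, they are unbounded below; then so are the bounds for
`L`, and both regularities are `⊥`. -/
theorem cmreg_le {I L : Ideal (MvPoly K (Fin n))} {k : ℕ} (hne : ∃ r, ResBound K (Fin n) I r)
    (h : ∀ r, ResBound K (Fin n) I r → ResBound K (Fin n) L (r + k)) :
    CMreg K (Fin n) L ≤ CMreg K (Fin n) I + ((k : ℤ) : WithBot ℤ) := by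
  classical
  unfold CMreg
  by_cases hL : ∃ r : ℤ, ResBound K (Fin n) L r ∧ ∀ s : ℤ, ResBound K (Fin n) L s → r ≤ s
  · have hI : ∃ r : ℤ, ResBound K (Fin n) I r ∧ ∀ s : ℤ, ResBound K (Fin n) I s → r ≤ s := by
      obtain ⟨r, -, hr⟩ := hL
      exact Int.exists_least_of_bdd ⟨r - k, fun z hz => by have := hr _ (h z hz); omega⟩ hne
    rw [dif_pos hL, dif_pos hI, ← WithBot.coe_add, WithBot.coe_le_coe]
    exact hL.choose_spec.2 _ (h _ hI.choose_spec.1)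
  · rw [dif_neg hL]
    exact bot_le

theorem exists_resBound (S : Finset (Fin n →₀ ℕ)) :
    ∃ r, ResBound K (Fin n) (Ideal.span (mono K '' (S : Set (Fin n →₀ ℕ)))) r := by
  obtain ⟨r, ⟨F⟩⟩ := exists_mres (K := K) S
  exact ⟨r, F.resBound⟩

/-- Apply `g` to the exponent of `x_i`. -/
noncomputable def coord (i : Fin n) (g : ℕ → ℕ) (a : Fin n →₀ ℕ) : Fin n →₀ ℕ :=
  a.update i (g (a i))

theorem coord_same (i : Fin n) (g : ℕ → ℕ) (a : Fin n →₀ ℕ) : coord i g a i = g (a i) := by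
  simp [coord]

theorem coord_ne {i j : Fin n} (h : j ≠ i) (g : ℕ → ℕ) (a : Fin n →₀ ℕ) : coord i g a j = a j := by
  simp [coord, Function.update_of_ne h]

theorem coord_eq {i : Fin n} {g : ℕ → ℕ} {a b : Fin n →₀ ℕ} (h : g (a i) = b i)
    (h' : ∀ j, j ≠ i → a j = b j) : coord i g a = b := by
  ext j
  by_cases hj : j = i
  · subst hj
    rw [coord_same, h]
  · rw [coord_ne hj, h' j hj]

theorem coord_gc (i : Fin n) {g f : ℕ → ℕ} (h : ∀ s t, g s ≤ t ↔ s ≤ f t) :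
    GaloisConnection (coord i g) (coord i f) := by
  intro a b
  simp only [Finsupp.le_def]
  refine forall_congr' fun j => ?_
  by_cases hj : j = i
  · subst hj
    rw [coord_same, coord_same]
    exact h _ _
  · rw [coord_ne hj, coord_ne hj]

theorem coord_zero (i : Fin n) {g : ℕ → ℕ} (h : g 0 = 0) : coord i g 0 = 0 :=
  coord_eq h fun _ _ => rfl

theorem coord_degree (i : Fin n) {g : ℕ → ℕ} {k : ℕ} (h : ∀ s, g s ≤ s + k) (a : Fin n →₀ ℕ) :
    (coord i g a).degree ≤ a.degree + k := by
  have hle : coord i g a ≤ a + Finsupp.single i k := by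
    intro j
    rw [Finsupp.add_apply]
    by_cases hj : j = i
    · subst hj
      rw [coord_same, Finsupp.single_eq_same]
      exact h _
    · rw [coord_ne hj]
      exact Nat.le_add_right _ _
  have h1 := tsub_add_cancel_of_le hle
  have h2 := congrArg Finsupp.degree h1
  rw [map_add, map_add, Finsupp.degree_single] at h2
  omega

/-- If `T` arises from `S` by applying to the exponents of `x_i` a lower adjoint `g` with
`g s ≤ s + k`, the regularity grows by at most `k`. -/
theorem cmreg_coord (i : Fin n) {g f : ℕ → ℕ} (hgf : ∀ s t, g s ≤ t ↔ s ≤ f t) (h0 : g 0 = 0)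
    {k : ℕ} (hk : ∀ s, g s ≤ s + k) {S T : Finset (Fin n →₀ ℕ)}
    (hT : (T : Set (Fin n →₀ ℕ)) = coord i g '' S) :
    CMreg K (Fin n) (Ideal.span (mono K '' (T : Set (Fin n →₀ ℕ)))) ≤
      CMreg K (Fin n) (Ideal.span (mono K '' (S : Set (Fin n →₀ ℕ)))) + ((k : ℤ) : WithBot ℤ) := by
  refine cmreg_le (exists_resBound S) fun r hr => ?_
  rw [hT]
  exact resBound_image (coord_gc i hgf) (coord_degree i hk) (coord_zero i h0) hr

/-- Lowering the `x_i`-exponent of the generators in `B` by `c`, where `c` is the amount by which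
`g` lowers `q`, amounts to applying `g` to all `x_i`-exponents. -/
theorem image_coord (i : Fin n) {g : ℕ → ℕ} {S A B : Finset (Fin n →₀ ℕ)} {q c : ℕ}
    (hS : S = B ∪ A) (hB : ∀ a ∈ B, a i = q) (hgq : g q = q - c) (hA : ∀ a ∈ A, g (a i) = a i) :
    (((B.image fun a => a - Finsupp.single i c) ∪ A : Finset (Fin n →₀ ℕ)) :
      Set (Fin n →₀ ℕ)) = coord i g '' S := by
  have hB' : ∀ a ∈ B, coord i g a = a - Finsupp.single i c := fun a ha =>
    coord_eq (by rw [Finsupp.tsub_apply, Finsupp.single_eq_same, hB a ha, hgq]) fun j hj => by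
      rw [Finsupp.tsub_apply, Finsupp.single_eq_of_ne hj, tsub_zero]
  have hA' : ∀ a ∈ A, coord i g a = a := fun a ha => coord_eq (hA a ha) fun _ _ => rfl
  rw [hS, Finset.coe_union, Finset.coe_union, Set.image_union, Finset.coe_image]
  congr 1
  · exact Set.image_congr fun a ha => (hB' a ha).symm
  · exact ((Set.image_congr hA').trans (Set.image_id' _)).symm

/-- The reverse of `image_coord`: `S` is recovered from the lowered generators by a `g` that raises
`q - c` back to `q`. -/
theorem coord_image (i : Fin n) {g : ℕ → ℕ} {S A B : Finset (Fin n →₀ ℕ)} {q c : ℕ}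
    (hS : S = B ∪ A) (hB : ∀ a ∈ B, a i = q) (hgq : g (q - c) = q) (hA : ∀ a ∈ A, g (a i) = a i) :
    (S : Set (Fin n →₀ ℕ)) = coord i g ''
      (((B.image fun a => a - Finsupp.single i c) ∪ A : Finset (Fin n →₀ ℕ)) :
        Set (Fin n →₀ ℕ)) := by
  have hB' : ∀ a ∈ B, coord i g (a - Finsupp.single i c) = a := fun a ha =>
    coord_eq (by rw [Finsupp.tsub_apply, Finsupp.single_eq_same, hB a ha, hgq]) fun j hj => by
      rw [Finsupp.tsub_apply, Finsupp.single_eq_of_ne hj, tsub_zero]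
  have hA' : ∀ a ∈ A, coord i g a = a := fun a ha => coord_eq (hA a ha) fun _ _ => rfl
  rw [hS, Finset.coe_union, Finset.coe_union, Set.image_union, Finset.coe_image, Set.image_image]
  congr 1
  · exact ((Set.image_congr hB').trans (Set.image_id' _)).symm
  · exact ((Set.image_congr hA').trans (Set.image_id' _)).symm

end Transfer

end RegRelabel

/-- behaviour of the regularity when lowering the top degree of a
variable `x_i` in the minimal generators of a monomial ideal `I`. -/
theorem stmt10 (K : Type) [Field K] (n : ℕ) (I : Ideal (MvPoly K (Fin n)))
    (S : Finset (Fin n →₀ ℕ)) (hmin : ∀ a ∈ S, ∀ b ∈ S, a ≤ b → a = b)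
    (hI : I = Ideal.span (mono K '' ↑S)) (i : Fin n) (hocc : ∃ a ∈ S, a i ≠ 0)
    (q p : ℕ) (hq : q = S.sup fun a => a i)
    (B A : Finset (Fin n →₀ ℕ))
    (hB : B = S.filter fun a => a i = q) (hA : A = S \ B)
    (hp : p = A.sup fun a => a i)
    (L L' : Ideal (MvPoly K (Fin n)))
    (hL : L = Ideal.span (mono K '' ↑((B.image fun a => a - Finsupp.single i 1) ∪ A)))
    (hL' : L' =
      Ideal.span (mono K '' ↑((B.image fun a => a - Finsupp.single i (q - 1)) ∪ A))) :
    ((1 ≤ p ∧ p + 2 ≤ q) →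
      CMreg K (Fin n) L ≤ CMreg K (Fin n) I ∧
        CMreg K (Fin n) I ≤ CMreg K (Fin n) L + 1) ∧
    (q = p + 1 → CMreg K (Fin n) L ≤ CMreg K (Fin n) I) ∧
    ((p = 0 ∧ 2 ≤ q) →
      CMreg K (Fin n) L' ≤ CMreg K (Fin n) I ∧
        CMreg K (Fin n) I ≤ CMreg K (Fin n) L' + (((q : ℤ) - 1 : ℤ) : WithBot ℤ)) := by
  have hS : S = B ∪ A := by
    rw [hA, Finset.union_sdiff_of_subset]
    rw [hB]
    exact Finset.filter_subset _ _
  have hBq : ∀ a ∈ B, a i = q := fun a ha => by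
    rw [hB] at ha
    exact (Finset.mem_filter.mp ha).2
  have hAp : ∀ a ∈ A, a i ≤ p := fun a ha => by
    rw [hp]
    exact Finset.le_sup (f := fun a : Fin n →₀ ℕ => a i) ha
  have hAq : ∀ a ∈ A, a i < q := fun a ha => by
    rw [hA, Finset.mem_sdiff, hB, Finset.mem_filter] at ha
    refine lt_of_le_of_ne ?_ fun h => ha.2 ⟨ha.1, h⟩
    rw [hq]
    exact Finset.le_sup (f := fun a : Fin n →₀ ℕ => a i) ha.1
  have hq1 : 1 ≤ q := by
    obtain ⟨a, ha, h0⟩ := hocc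
    have h := Finset.le_sup (f := fun a : Fin n →₀ ℕ => a i) ha
    rw [← hq] at h
    exact (Nat.one_le_iff_ne_zero.mpr h0).trans h
  -- Exponents `≥ q` drop by one; all generators in `A` are fixed.
  have hLI : CMreg K (Fin n) L ≤ CMreg K (Fin n) I := by
    have h := RegRelabel.cmreg_coord (K := K) i (g := fun s => if s < q then s else s - 1)
      (f := fun t => if t + 1 < q then t else t + 1) (k := 0) (S := S)
      (fun s t => by split_ifs <;> omega) (by simp)
      (fun s => by split_ifs <;> omega)
      (RegRelabel.image_coord i hS hBq (c := 1) (by simp)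
        fun a ha => if_pos (hAq a ha))
    rw [← hL, ← hI] at h
    simpa using h
  refine ⟨fun ⟨_, h2⟩ => ⟨hLI, ?_⟩, fun _ => hLI, fun ⟨hp0, h2⟩ => ⟨?_, ?_⟩⟩
  -- Exponents `≥ q - 1` rise by one; `A` is fixed because its exponents are at most `q - 2`.
  · have h := RegRelabel.cmreg_coord (K := K) i (g := fun s => if s + 2 ≤ q then s else s + 1)
      (f := fun t => if t + 2 ≤ q then t else t - 1) (k := 1) (T := S)
      (fun s t => by split_ifs <;> omega) (by split_ifs <;> omega)
      (fun s => by split_ifs <;> omega)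
      (RegRelabel.coord_image i hS hBq (c := 1) (by split_ifs <;> omega)
        fun a ha => if_pos (by have := hAp a ha; omega))
    rw [← hL, ← hI] at h
    simpa using h
  -- Exponents `1, …, q` become `1`, and larger ones drop by `q - 1`.
  · have h := RegRelabel.cmreg_coord (K := K) i
      (g := fun s => if s = 0 then 0 else if s ≤ q then 1 else s - (q - 1))
      (f := fun t => if t = 0 then 0 else t + (q - 1)) (k := 0) (S := S)
      (fun s t => by split_ifs <;> omega) (by simp)
      (fun s => by split_ifs <;> omega)
      (RegRelabel.image_coord i hS hBq (c := q - 1) (by split_ifs <;> omega)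
        fun a ha => by have := hAp a ha; split_ifs <;> omega)
    rw [← hL', ← hI] at h
    simpa using h
  -- Positive exponents rise by `q - 1`.
  · have h := RegRelabel.cmreg_coord (K := K) i
      (g := fun s => if s = 0 then 0 else s + (q - 1))
      (f := fun t => if t < q then 0 else t - (q - 1)) (k := q - 1) (T := S)
      (fun s t => by split_ifs <;> omega) (by simp)
      (fun s => by split_ifs <;> omega)
      (RegRelabel.coord_image i hS hBq (c := q - 1) (by split_ifs <;> omega)
        fun a ha => by have := hAp a ha; split_ifs <;> omega)
    rw [← hL', ← hI] at h
    have e : ((q - 1 : ℕ) : ℤ) = (q : ℤ) - 1 := by omega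
    rwa [e] at h
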